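/- arXiv:2510.27193 — 4 statements merged into one kernel-verified Lean document; each statement's English description precedes it below -/
import Mathlib

section
/- Let n ≥ 1 and let A be an invertible n×n complex matrix none of whose eigenvalues lies on the closed negative real axis (-∞, 0]. Then there exists a unique n×n complex matrix X such that exp(X) = A and every eigenvalue z of X satisfies -π < Im(z) < π (X is the principal logarithm of A). -/
open NormedSpace

/-!
For an element `a` of a complex Banach algebra with spectrum in the slit plane, the segment from
`1` to `a` consists of units, so `x = ∫ t in 0..1, (a - 1) (1 + t (a - 1))⁻¹` makes sense. When the
algebra is commutative, `exp (-∫ t in 0..s, (a - 1) (1 + t (a - 1))⁻¹) * (1 + s (a - 1))` has zero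
derivative in `s`, whence `exp x = a`; and a character `φ` sends `x` to `log (φ a)`, which locates
the spectrum of `x` by Gelfand theory. Two logarithms with spectrum in the strip agree under every
character, so their difference `z` is killed by all characters and satisfies
`0 = exp z - 1 = z * ∫ t in 0..1, exp (t z)`, where the last factor is mapped to `1` by every
character and is therefore a unit.

The bicommutant of a commuting set is a commutative Banach algebra in which spectra are the same as
in the whole algebra, which removes the commutativity assumption: the logarithm found in the
bicommutant of `a` commutes with every other logarithm of `a`.
-/

open Complex (slitPlane)
open Set WeakDual
open scoped Ring

theorem isUnit_coe_centralizer_iff {R A : Type*} [CommSemiring R] [Semiring A] [Algebra R A]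
    {s : Set A} {x : Subalgebra.centralizer R s} :
    IsUnit (x : A) ↔ IsUnit x := by
  refine ⟨fun ⟨u, hu⟩ ↦ ?_, fun h ↦ h.map (Subalgebra.centralizer R s).val⟩
  have inv_mem : (↑u⁻¹ : A) ∈ Subalgebra.centralizer R s := fun g hg ↦
    Commute.units_inv_right (hu ▸ x.2 g hg)
  exact ⟨⟨x, ⟨_, inv_mem⟩, Subtype.ext (by simp [← hu]), Subtype.ext (by simp [← hu])⟩, rfl⟩

theorem spectrum_coe_centralizer {R A : Type*} [CommRing R] [Ring A] [Algebra R A] {s : Set A}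
    (x : Subalgebra.centralizer R s) : spectrum R (x : A) = spectrum R x := by
  ext r
  simp only [spectrum.mem_iff, ← isUnit_coe_centralizer_iff]
  rfl

theorem map_ringInverse {F M₀ G₀ : Type*} [MonoidWithZero M₀] [GroupWithZero G₀] [FunLike F M₀ G₀]
    [MonoidHomClass F M₀ G₀] (φ : F) {x : M₀} (hx : IsUnit x) : φ x⁻¹ʳ = (φ x)⁻¹ := by
  obtain ⟨u, rfl⟩ := hx
  rw [Ring.inverse_unit]
  exact eq_inv_of_mul_eq_one_left (by rw [← map_mul, u.inv_mul, map_one])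

section BanachAlgebra

variable {A : Type*} [NormedRing A] [NormedAlgebra ℝ A] [CompleteSpace A]

theorem continuousAt_inverse_one_add_smul {b : A} {t : ℝ} (h : IsUnit (1 + t • b)) :
    ContinuousAt (fun t : ℝ ↦ (1 + t • b)⁻¹ʳ) t := by
  have cont_inverse : ContinuousAt Ring.inverse (1 + t • b) :=
    NormedRing.inverse_continuousAt h.unit
  exact cont_inverse.comp (f := fun t : ℝ ↦ 1 + t • b) (by fun_prop)

theorem intervalIntegrable_inverse_one_add_smul {b : A}
    (hb : ∀ t ∈ Icc (0 : ℝ) 1, IsUnit (1 + t • b)) {s : ℝ} (hs : s ∈ Icc (0 : ℝ) 1) :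
    IntervalIntegrable (fun t : ℝ ↦ (1 + t • b)⁻¹ʳ) MeasureTheory.volume 0 s := by
  refine ContinuousOn.intervalIntegrable_of_Icc hs.1 fun t ht ↦ ?_
  exact (continuousAt_inverse_one_add_smul (hb t ⟨ht.1, ht.2.trans hs.2⟩)).continuousWithinAt

theorem hasDerivAt_integral_inverse_one_add_smul {b : A}
    (hb : ∀ t ∈ Icc (0 : ℝ) 1, IsUnit (1 + t • b)) {s : ℝ} (hs : s ∈ Icc (0 : ℝ) 1) :
    HasDerivAt (fun u : ℝ ↦ ∫ t in (0 : ℝ)..u, (1 + t • b)⁻¹ʳ) (1 + s • b)⁻¹ʳ s := by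
  have isOpen_units : IsOpen {t : ℝ | IsUnit (1 + t • b)} :=
    Units.isOpen.preimage (by fun_prop : Continuous fun t : ℝ ↦ 1 + t • b)
  have continuousOn_units :
      ContinuousOn (fun t : ℝ ↦ (1 + t • b)⁻¹ʳ) {t : ℝ | IsUnit (1 + t • b)} :=
    fun t ht ↦ (continuousAt_inverse_one_add_smul ht).continuousWithinAt
  exact intervalIntegral.integral_hasDerivAt_right
    (intervalIntegrable_inverse_one_add_smul hb hs)
    (continuousOn_units.stronglyMeasurableAtFilter isOpen_units s (hb s hs))
    (continuousAt_inverse_one_add_smul (hb s hs))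

theorem exp_sub_one_eq_mul_integral (z : A) :
    exp z - 1 = z * ∫ t in (0 : ℝ)..1, exp (t • z) := by
  have deriv (t : ℝ) : HasDerivAt (fun t : ℝ ↦ exp (t • z)) (z * exp (t • z)) t :=
    hasDerivAt_exp_smul_const' z t
  have cont : Continuous fun t : ℝ ↦ exp (t • z) :=
    (differentiable_exp_smul_const ℝ z).continuous
  have ftc := intervalIntegral.integral_eq_sub_of_hasDerivAt (fun t _ ↦ deriv t)
    ((continuous_const.mul cont).intervalIntegrable 0 1)
  rw [one_smul, zero_smul, exp_zero] at ftc
  rw [← ftc]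
  exact (ContinuousLinearMap.mul ℝ A z).intervalIntegral_comp_comm (cont.intervalIntegrable 0 1)

end BanachAlgebra

theorem exp_mul_integral_inverse_one_add_smul {A : Type*} [NormedCommRing A]
    [NormedAlgebra ℝ A] [CompleteSpace A] {b : A}
    (hb : ∀ t ∈ Icc (0 : ℝ) 1, IsUnit (1 + t • b)) :
    exp (b * ∫ t in (0 : ℝ)..1, (1 + t • b)⁻¹ʳ) = 1 + b := by
  have : NormedAlgebra ℚ A := .restrictScalars ℚ ℝ A
  let F (s : ℝ) : A := b * ∫ t in (0 : ℝ)..s, (1 + t • b)⁻¹ʳ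
  let G (s : ℝ) : A := (1 + s • b) * exp (-F s)
  have deriv_F (s : ℝ) (hs : s ∈ Icc (0 : ℝ) 1) : HasDerivAt F (b * (1 + s • b)⁻¹ʳ) s :=
    (hasDerivAt_integral_inverse_one_add_smul hb hs).const_mul b
  have deriv_G (s : ℝ) (hs : s ∈ Icc (0 : ℝ) 1) : HasDerivAt G 0 s := by
    have deriv_exp : HasDerivAt (fun s ↦ exp (-F s)) (exp (-F s) * -(b * (1 + s • b)⁻¹ʳ)) s :=
      (hasFDerivAt_exp (𝕂 := ℝ)).comp_hasDerivAt (f := fun s ↦ -F s) s (deriv_F s hs).fun_neg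
    have deriv_line : HasDerivAt (fun s : ℝ ↦ 1 + s • b) b s := by
      simpa only [id_eq, one_smul] using ((hasDerivAt_id s).smul_const b).const_add 1
    convert! deriv_line.mul deriv_exp using 1
    linear_combination exp (-F s) * b * Ring.inverse_mul_cancel _ (hb s hs)
  have G_const : G 1 = G 0 := constant_of_has_deriv_right_zero
    (fun s hs ↦ (deriv_G s hs).continuousAt.continuousWithinAt)
    (fun s hs ↦ (deriv_G s (Ico_subset_Icc_self hs)).hasDerivWithinAt) 1 (by simp)
  have G_one : (1 + b) * exp (-F 1) = 1 := by simpa [G, F] using G_const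
  calc exp (F 1) = (1 + b) * exp (-F 1) * exp (F 1) := by rw [G_one, one_mul]
    _ = 1 + b := by rw [mul_assoc, ← exp_add, neg_add_cancel, exp_zero, mul_one]

section GelfandTheory

variable {A : Type*} [NormedCommRing A] [NormedAlgebra ℂ A] [CompleteSpace A]

theorem characterSpace_map_exp (φ : characterSpace ℂ A) (x : A) :
    φ (exp x) = Complex.exp (φ x) := by
  have : NormedAlgebra ℚ A := .restrictScalars ℚ ℂ A
  rw [Complex.exp_eq_exp_ℂ]
  exact map_exp φ (map_continuous φ) x

theorem characterSpace_map_integral (φ : characterSpace ℂ A) {f : ℝ → A} {a b : ℝ}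
    (hf : IntervalIntegrable f MeasureTheory.volume a b) :
    φ (∫ t in a..b, f t) = ∫ t in a..b, φ (f t) :=
  ((CharacterSpace.toCLM φ).intervalIntegral_comp_comm hf).symm

theorem isUnit_of_forall_characterSpace_ne_zero {x : A}
    (h : ∀ φ : characterSpace ℂ A, φ x ≠ 0) : IsUnit x := by
  by_contra hx
  obtain ⟨φ, hφ⟩ := CharacterSpace.exists_apply_eq_zero hx
  exact h φ hφ

theorem isUnit_one_add_smul_sub_one {a : A} (ha : spectrum ℂ a ⊆ slitPlane) {t : ℝ}
    (ht : t ∈ Icc (0 : ℝ) 1) : IsUnit (1 + t • (a - 1)) := by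
  refine isUnit_of_forall_characterSpace_ne_zero fun φ ↦ ?_
  rw [map_add, map_one, map_real_smul φ (map_continuous φ)]
  have hφ : 1 + φ (a - 1) ∈ slitPlane := by
    simpa using ha (CharacterSpace.mem_spectrum_iff_exists.2 ⟨φ, rfl⟩)
  exact Complex.slitPlane_ne_zero
    (StarConvex.add_smul_mem Complex.starConvex_one_slitPlane hφ ht.1 ht.2)

theorem characterSpace_map_log {a : A} (ha : spectrum ℂ a ⊆ slitPlane)
    (φ : characterSpace ℂ A) :
    φ ((a - 1) * ∫ t in (0 : ℝ)..1, (1 + t • (a - 1))⁻¹ʳ) = Complex.log (φ a) := by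
  have hφ : 1 + φ (a - 1) = φ a := by simp
  have isUnit_segment (t : ℝ) (ht : t ∈ Icc (0 : ℝ) 1) := isUnit_one_add_smul_sub_one ha ht
  rw [map_mul, characterSpace_map_integral φ
      (intervalIntegrable_inverse_one_add_smul isUnit_segment (by simp)), ← hφ,
    Complex.log_eq_integral (hφ ▸ ha (CharacterSpace.mem_spectrum_iff_exists.2 ⟨φ, rfl⟩))]
  congr 1
  refine intervalIntegral.integral_congr fun t ht ↦ ?_
  rw [uIcc_of_le zero_le_one] at ht
  simp only [map_ringInverse φ (isUnit_segment t ht), map_add, map_one,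
    map_real_smul φ (map_continuous φ)]

theorem exists_exp_eq_of_spectrum_subset_slitPlane {a : A} (ha : spectrum ℂ a ⊆ slitPlane) :
    ∃ x : A, exp x = a ∧ ∀ z ∈ spectrum ℂ x, z.im ∈ Ioo (-Real.pi) Real.pi := by
  refine ⟨(a - 1) * ∫ t in (0 : ℝ)..1, (1 + t • (a - 1))⁻¹ʳ, ?_, fun z hz ↦ ?_⟩
  · rw [exp_mul_integral_inverse_one_add_smul fun t ht ↦ isUnit_one_add_smul_sub_one ha ht,
      add_sub_cancel]
  · obtain ⟨φ, rfl⟩ := CharacterSpace.mem_spectrum_iff_exists.1 hz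
    have hφ : φ a ∈ slitPlane := ha (CharacterSpace.mem_spectrum_iff_exists.2 ⟨φ, rfl⟩)
    rw [characterSpace_map_log ha, Complex.log_im]
    exact ⟨Complex.neg_pi_lt_arg _,
      (Complex.arg_le_pi _).lt_of_ne (Complex.mem_slitPlane_iff_arg.1 hφ).1⟩

theorem eq_zero_of_exp_eq_one_of_characterSpace {z : A}
    (hz : ∀ φ : characterSpace ℂ A, φ z = 0) (h : exp z = 1) : z = 0 := by
  have isUnit_integral : IsUnit (∫ t in (0 : ℝ)..1, exp (t • z)) := by
    refine isUnit_of_forall_characterSpace_ne_zero fun φ ↦ ?_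
    have φ_exp (t : ℝ) : φ (exp (t • z)) = 1 := by
      rw [characterSpace_map_exp, ← Complex.coe_smul, map_smul, hz, smul_zero, Complex.exp_zero]
    rw [characterSpace_map_integral φ
      ((differentiable_exp_smul_const ℝ z).continuous.intervalIntegrable 0 1)]
    simp [φ_exp]
  rw [← isUnit_integral.mul_left_eq_zero, ← exp_sub_one_eq_mul_integral, h, sub_self]

theorem eq_of_exp_eq_of_spectrum_im_mem_Ioo {x y : A}
    (hx : ∀ z ∈ spectrum ℂ x, z.im ∈ Ioo (-Real.pi) Real.pi)
    (hy : ∀ z ∈ spectrum ℂ y, z.im ∈ Ioo (-Real.pi) Real.pi) (h : exp x = exp y) : x = y := by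
  have : NormedAlgebra ℚ A := .restrictScalars ℚ ℂ A
  have φ_eq (φ : characterSpace ℂ A) : φ x = φ y := by
    have hφx := hx _ (CharacterSpace.mem_spectrum_iff_exists.2 ⟨φ, rfl⟩)
    have hφy := hy _ (CharacterSpace.mem_spectrum_iff_exists.2 ⟨φ, rfl⟩)
    refine Complex.exp_inj_of_neg_pi_lt_of_le_pi hφx.1 hφx.2.le hφy.1 hφy.2.le ?_
    rw [← characterSpace_map_exp, ← characterSpace_map_exp, h]
  have exp_sub : exp (x - y) = 1 := by
    rw [sub_eq_add_neg, exp_add, h, ← exp_add, add_neg_cancel, exp_zero]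
  exact sub_eq_zero.1 (eq_zero_of_exp_eq_one_of_characterSpace
    (fun φ ↦ by rw [map_sub, φ_eq, sub_self]) exp_sub)

end GelfandTheory

section Bicommutant

variable {A : Type*} [NormedRing A] [NormedAlgebra ℂ A]

/-- The bicommutant of a set in a complex normed algebra, as a subalgebra: the elements commuting
with everything that commutes with the set. -/
abbrev bicommutant (s : Set A) : Subalgebra ℂ A :=
  Subalgebra.centralizer ℂ (Subalgebra.centralizer ℂ s)

namespace bicommutant

/-- The normed ring structure on the bicommutant of a commuting set, bundled with commutativity so
that Gelfand theory applies. -/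
abbrev normedCommRing {s : Set A} (hs : ∀ x ∈ s, ∀ y ∈ s, x * y = y * x) :
    NormedCommRing (bicommutant s) where
  mul_comm x y := Subtype.ext (centralizer_centralizer_comm_of_comm hs x x.2 y y.2)

theorem subset (s : Set A) : s ⊆ bicommutant s := subset_centralizer_centralizer

variable [CompleteSpace A]

instance (s : Set A) : CompleteSpace (bicommutant s) :=
  (isClosed_centralizer _).completeSpace_coe

theorem coe_exp {s : Set A} (x : bicommutant s) : ((exp x : bicommutant s) : A) = exp (x : A) := by
  let : NormedAlgebra ℚ A := .restrictScalars ℚ ℂ A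
  let : NormedAlgebra ℚ (bicommutant s) := .restrictScalars ℚ ℂ (bicommutant s)
  exact map_exp (bicommutant s).val continuous_subtype_val x

end bicommutant

variable [CompleteSpace A]

theorem exists_mem_bicommutant_exp_eq {a : A} (ha : spectrum ℂ a ⊆ slitPlane) :
    ∃ x ∈ bicommutant {a}, exp x = a ∧ ∀ z ∈ spectrum ℂ x, z.im ∈ Ioo (-Real.pi) Real.pi := by
  let : NormedCommRing (bicommutant {a}) := bicommutant.normedCommRing (by simp)
  let a' : bicommutant {a} := ⟨a, bicommutant.subset {a} rfl⟩
  have ha' : spectrum ℂ a' ⊆ slitPlane := spectrum_coe_centralizer a' ▸ ha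
  obtain ⟨x, exp_x, hx⟩ := exists_exp_eq_of_spectrum_subset_slitPlane ha'
  refine ⟨x, x.2, ?_, spectrum_coe_centralizer x ▸ hx⟩
  rw [← bicommutant.coe_exp, exp_x]

theorem eq_of_commute_of_exp_eq_of_spectrum_im_mem_Ioo {x y : A} (hxy : Commute x y)
    (hx : ∀ z ∈ spectrum ℂ x, z.im ∈ Ioo (-Real.pi) Real.pi)
    (hy : ∀ z ∈ spectrum ℂ y, z.im ∈ Ioo (-Real.pi) Real.pi) (h : exp x = exp y) : x = y := by
  let : NormedCommRing (bicommutant {x, y}) :=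
    bicommutant.normedCommRing (by simp [hxy.eq])
  let x' : bicommutant {x, y} := ⟨x, bicommutant.subset {x, y} (by simp)⟩
  let y' : bicommutant {x, y} := ⟨y, bicommutant.subset {x, y} (by simp)⟩
  have exp_eq : exp x' = exp y' := Subtype.ext (by rw [bicommutant.coe_exp, bicommutant.coe_exp, h])
  exact congrArg Subtype.val (eq_of_exp_eq_of_spectrum_im_mem_Ioo
    (spectrum_coe_centralizer x' ▸ hx) (spectrum_coe_centralizer y' ▸ hy) exp_eq)

end Bicommutant

theorem principal_log_exists_unique_general {A : Type*} [NormedRing A] [NormedAlgebra ℂ A]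
    [CompleteSpace A] {a : A} (ha : spectrum ℂ a ⊆ slitPlane) :
    ∃! x : A, exp x = a ∧ ∀ z ∈ spectrum ℂ x, z.im ∈ Ioo (-Real.pi) Real.pi := by
  obtain ⟨x, x_mem, exp_x, hx⟩ := exists_mem_bicommutant_exp_eq ha
  refine ⟨x, ⟨exp_x, hx⟩, fun y ⟨exp_y, hy⟩ ↦ ?_⟩
  have y_comm_a : Commute a y := exp_y ▸ (Commute.refl y).exp_left
  have y_comm_x : Commute y x := x_mem y fun _ hg ↦ hg ▸ y_comm_a
  exact eq_of_commute_of_exp_eq_of_spectrum_im_mem_Ioo y_comm_x hy hx (exp_y.trans exp_x.symm)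

/-- **Principal logarithm of a complex matrix.**
Let `n ≥ 1` and let `A` be an invertible `n×n` complex matrix none of whose eigenvalues lies
on the closed negative real axis `(-∞, 0]`. Then there exists a unique `n×n` complex matrix
`X` such that `exp(X) = A` and every eigenvalue `z` of `X` satisfies `-π < Im z < π`. -/
theorem principal_log_exists_unique (n : ℕ) (hn : 1 ≤ n)
    (A : Matrix (Fin n) (Fin n) ℂ) (hA : IsUnit A)
    (hspec : ∀ μ ∈ spectrum ℂ A, ¬(μ.im = 0 ∧ μ.re ≤ 0)) :
    ∃! X : Matrix (Fin n) (Fin n) ℂ,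
      NormedSpace.exp X = A ∧
        ∀ z ∈ spectrum ℂ X, -Real.pi < z.im ∧ z.im < Real.pi := by
  open scoped Matrix.Norms.Operator in
  exact principal_log_exists_unique_general fun μ hμ ↦
    Complex.mem_slitPlane_iff_not_le_zero.2 fun h ↦ hspec μ hμ ⟨h.2, h.1⟩
end

section
/- Let J₀ be the standard 2n×2n symplectic matrix, given in block form by J₀ = [[0, -Iₙ],[Iₙ, 0]]. Let A be a real 2n×2n symplectic matrix, i.e. Aᵀ J₀ A = J₀, such that no eigenvalue of A lies on the closed negative real axis (-∞, 0]. If X is a real 2n×2n matrix with exp(X) = A and every eigenvalue z of X satisfies -π < Im(z) < π, then X is infinitesimally symplectic: J₀ X + Xᵀ J₀ = 0. -/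
open NormedSpace Matrix

/-!
Left and right multiplications commute, so `z ↦ exp x * z * exp y` is the exponential of the
Sylvester operator `D z = x * z + z * y`, whose eigenvalues are sums `a + b` of spectral values
`a` of `x` and `b` of `y`. If no such sum is a nonzero period of `exp`, then `exp D z = z` forces
`D z = 0`: on the fixed space of `exp D` the only eigenvalue of `D` is `0`, and `D` has no Jordan
chain of length two there, because `exp D u = u + D u` whenever `D (D u) = 0`. The symplectic
relation `exp Xᵀ * J₀ * exp X = J₀` is the case `x = Xᵀ`, `y = X`, `z = J₀`.
-/

section Eigenvectors

variable {K V : Type*} [Field K] [IsAlgClosed K] [AddCommGroup V] [Module K V]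

theorem exists_hasEigenvector_mem_of_mapsTo {f : Module.End K V} {W : Submodule K V}
    [FiniteDimensional K W] (hf : Set.MapsTo f W W) (hW : W ≠ ⊥) :
    ∃ c, ∃ w ∈ W, f.HasEigenvector c w := by
  have : Nontrivial W := Submodule.nontrivial_iff_ne_bot.mpr hW
  obtain ⟨c, hc⟩ := Module.End.exists_eigenvalue (f.restrict hf)
  obtain ⟨w, hw⟩ := hc.exists_hasEigenvector
  refine ⟨c, w, w.2, Module.End.mem_eigenspace_iff.mpr ?_, Subtype.coe_ne_coe.mpr hw.2⟩
  exact congrArg Subtype.val hw.apply_eq_smul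

theorem exists_hasEigenvector_apply_of_mapsTo {f : Module.End K V} {W : Submodule K V}
    [FiniteDimensional K W] (hf : Set.MapsTo f W W) {w : V} (hw : w ∈ W) (hfw : f w ≠ 0) :
    ∃ c, ∃ u ∈ W, f.HasEigenvector c (f u) := by
  have hmaps : Set.MapsTo f (W.map f) (W.map f) := by
    rintro _ ⟨u, hu, rfl⟩
    exact Submodule.mem_map_of_mem (hf hu)
  have hne : W.map f ≠ ⊥ := (Submodule.ne_bot_iff _).mpr ⟨f w, Submodule.mem_map_of_mem hw, hfw⟩
  obtain ⟨c, _, ⟨u, hu, rfl⟩, huc⟩ := exists_hasEigenvector_mem_of_mapsTo hmaps hne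
  exact ⟨c, u, hu, huc⟩

end Eigenvectors

section Spectrum

variable {R A : Type*} [CommSemiring R] [Ring A] [Algebra R A]

theorem mem_spectrum_of_mul_eq_smul {x z : A} {a : R} (hz : z ≠ 0) (h : x * z = a • z) :
    a ∈ spectrum R x := by
  refine spectrum.mem_iff.mpr fun hu ↦ hz (hu.mul_right_eq_zero.mp ?_)
  rw [sub_mul, h, ← Algebra.smul_def, sub_self]

theorem mem_spectrum_of_mul_eq_smul' {y z : A} {b : R} (hz : z ≠ 0) (h : z * y = b • z) :
    b ∈ spectrum R y := by
  refine spectrum.mem_iff.mpr fun hu ↦ hz (hu.mul_left_eq_zero.mp ?_)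
  rw [mul_sub, h, ← Algebra.commutes, ← Algebra.smul_def, sub_self]

end Spectrum

theorem exists_mem_spectrum_add_eq_of_mul_add_mul_eq_smul {K A : Type*} [Field K]
    [IsAlgClosed K] [Ring A] [Algebra K A] [FiniteDimensional K A] {x y z : A} {c : K}
    (hz : z ≠ 0) (h : x * z + z * y = c • z) :
    ∃ a ∈ spectrum K x, ∃ b ∈ spectrum K y, a + b = c := by
  let W := Module.End.eigenspace (LinearMap.mulLeft K x + LinearMap.mulRight K y) c
  have mem_W {w : A} : w ∈ W ↔ x * w + w * y = c • w := Module.End.mem_eigenspace_iff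
  have hmaps : Set.MapsTo (LinearMap.mulLeft K x) W W := fun w hw ↦ by
    rw [SetLike.mem_coe, mem_W] at hw ⊢
    rw [LinearMap.mulLeft_apply, mul_assoc, ← mul_add, hw, mul_smul_comm]
  obtain ⟨a, w, hwW, hw⟩ := exists_hasEigenvector_mem_of_mapsTo hmaps
    ((Submodule.ne_bot_iff W).mpr ⟨z, mem_W.mpr h, hz⟩)
  have hxw : x * w = a • w := hw.apply_eq_smul
  have hwy : w * y = (c - a) • w := by
    rw [sub_smul, ← mem_W.mp hwW, hxw, add_sub_cancel_left]
  exact ⟨a, mem_spectrum_of_mul_eq_smul hw.2 hxw, c - a,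
    mem_spectrum_of_mul_eq_smul' hw.2 hwy, add_sub_cancel a c⟩

theorem exp_mul_mul_exp_eq_of_hasDerivAt {𝕜 A : Type*} [RCLike 𝕜] [NormedRing A]
    [NormedAlgebra 𝕜 A] [CompleteSpace A] {x y : A} {f : 𝕜 → A}
    (hf : ∀ t, HasDerivAt f (-(x * f t + f t * y)) t) :
    exp x * f 1 * exp y = f 0 := by
  have hderiv (t : 𝕜) :
      HasDerivAt (fun s : 𝕜 ↦ exp (s • x) * f s * exp (s • y)) 0 t := by
    refine (((hasDerivAt_exp_smul_const x t).fun_mul (hf t)).fun_mul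
      (hasDerivAt_exp_smul_const' y t)).congr_deriv ?_
    noncomm_ring
  simpa using is_const_of_deriv_eq_zero (fun t ↦ (hderiv t).differentiableAt)
    (fun t ↦ (hderiv t).deriv) 1 0

section ComplexBanachAlgebra

variable {A : Type*} [NormedRing A] [NormedAlgebra ℂ A] {x y z : A}

theorem exp_mul_mul_exp_eq_smul_of_mul_add_mul_eq_smul [CompleteSpace A] {c : ℂ}
    (h : x * z + z * y = c • z) : exp x * z * exp y = Complex.exp c • z := by
  have hf (t : ℂ) : HasDerivAt (fun s ↦ Complex.exp (s * -c) • z)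
      (-(x * (Complex.exp (t * -c) • z) + Complex.exp (t * -c) • z * y)) t := by
    refine ((((hasDerivAt_id t).mul_const (-c)).cexp).smul_const z).congr_deriv ?_
    rw [mul_smul_comm, smul_mul_assoc, ← smul_add, h]
    simp [mul_smul]
  have hz : Complex.exp (-c) • (exp x * z * exp y) = z := by
    simpa using exp_mul_mul_exp_eq_of_hasDerivAt hf
  rw [← hz, smul_smul, ← Complex.exp_add, add_neg_cancel, Complex.exp_zero, one_smul, hz]

theorem exp_mul_mul_exp_eq_add_of_mul_add_mul_eq [CompleteSpace A] {w : A}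
    (hz : x * z + z * y = w) (hw : x * w + w * y = 0) :
    exp x * z * exp y = z + w := by
  have hf (t : ℂ) : HasDerivAt (fun s ↦ z - s • w)
      (-(x * (z - t • w) + (z - t • w) * y)) t := by
    refine (((hasDerivAt_id t).smul_const w).const_sub z).congr_deriv ?_
    have hwt : x * (t • w) + t • w * y = 0 := by
      rw [mul_smul_comm, smul_mul_assoc, ← smul_add, hw, smul_zero]
    rw [mul_sub, sub_mul, sub_add_sub_comm, hz, hwt, sub_zero, one_smul]
  have hzw : exp x * (z - w) * exp y = z := by
    simpa using exp_mul_mul_exp_eq_of_hasDerivAt hf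
  have hww : exp x * w * exp y = w := by
    simpa using exp_mul_mul_exp_eq_smul_of_mul_add_mul_eq_smul
      (hw.trans (zero_smul ℂ w).symm)
  rwa [mul_sub, sub_mul, hww, sub_eq_iff_eq_add] at hzw

theorem mul_add_mul_eq_zero_of_exp_mul_mul_exp_eq [FiniteDimensional ℂ A]
    (hspec : ∀ a ∈ spectrum ℂ x, ∀ b ∈ spectrum ℂ y, Complex.exp (a + b) = 1 → a + b = 0)
    (h : exp x * z * exp y = z) : x * z + z * y = 0 := by
  have : CompleteSpace A := FiniteDimensional.complete ℂ A
  let D : Module.End ℂ A := LinearMap.mulLeft ℂ x + LinearMap.mulRight ℂ y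
  let W := Module.End.eigenspace (LinearMap.mulLeft ℂ (exp x) * LinearMap.mulRight ℂ (exp y)) 1
  have mem_W {w : A} : w ∈ W ↔ exp x * w * exp y = w := by
    simp [W, mul_assoc]
  have hmaps : Set.MapsTo D W W := fun w hw ↦ by
    rw [SetLike.mem_coe, mem_W] at hw ⊢
    calc exp x * (x * w + w * y) * exp y
        = exp x * x * w * exp y + exp x * w * (y * exp y) := by noncomm_ring
      _ = x * (exp x * w * exp y) + exp x * w * exp y * y := by
        rw [(Commute.refl x).exp_left.eq, (Commute.refl y).exp_right.eq]
        noncomm_ring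
      _ = x * w + w * y := by rw [hw]
  by_contra hne
  obtain ⟨c, u, huW, hu⟩ := exists_hasEigenvector_apply_of_mapsTo hmaps (mem_W.mpr h) hne
  have hDu : x * D u + D u * y = c • D u := hu.apply_eq_smul
  have hc : c = 0 := by
    obtain ⟨a, ha, b, hb, rfl⟩ := exists_mem_spectrum_add_eq_of_mul_add_mul_eq_smul hu.2 hDu
    refine hspec a ha b hb (smul_left_injective ℂ hu.2 ?_)
    dsimp only
    rw [← exp_mul_mul_exp_eq_smul_of_mul_add_mul_eq_smul hDu, mem_W.mp (hmaps huW), one_smul]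
  have hu_add : u = u + D u := (mem_W.mp huW).symm.trans <|
    exp_mul_mul_exp_eq_add_of_mul_add_mul_eq rfl (by rw [hDu, hc, zero_smul])
  exact hu.2 (left_eq_add.mp hu_add)

end ComplexBanachAlgebra

section MatrixExponential

variable {ι : Type*} [Fintype ι] [DecidableEq ι]

theorem spectrum_matrix_transpose {R : Type*} [CommRing R] (M : Matrix ι ι R) :
    spectrum R Mᵀ = spectrum R M := by
  ext a
  simp only [Matrix.mem_spectrum_iff_not_isUnit_eval_charpoly, Matrix.charpoly_transpose]

theorem exp_map_algebraMap_complex (M : Matrix ι ι ℝ) :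
    (exp M).map (algebraMap ℝ ℂ) = exp (M.map (algebraMap ℝ ℂ)) := by
  open scoped Matrix.Norms.Operator in
  exact map_exp (algebraMap ℝ ℂ).mapMatrix (continuous_id.matrix_map Complex.continuous_ofReal) M

theorem mul_add_transpose_mul_eq_zero_of_exp_transpose_mul_mul_exp_eq {J X : Matrix ι ι ℂ}
    (hJ : (exp X)ᵀ * J * exp X = J)
    (hspec : ∀ a ∈ spectrum ℂ X, ∀ b ∈ spectrum ℂ X, Complex.exp (a + b) = 1 → a + b = 0) :
    J * X + Xᵀ * J = 0 := by
  have hspec_transpose : ∀ a ∈ spectrum ℂ Xᵀ, ∀ b ∈ spectrum ℂ X,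
      Complex.exp (a + b) = 1 → a + b = 0 := by
    rwa [spectrum_matrix_transpose]
  rw [← Matrix.exp_transpose] at hJ
  rw [add_comm]
  open scoped Matrix.Norms.Operator in
  exact mul_add_mul_eq_zero_of_exp_mul_mul_exp_eq hspec_transpose hJ

end MatrixExponential

theorem add_eq_zero_of_cexp_add_eq_one {a b : ℂ} (ha : -Real.pi < a.im ∧ a.im < Real.pi)
    (hb : -Real.pi < b.im ∧ b.im < Real.pi) (h : Complex.exp (a + b) = 1) : a + b = 0 := by
  have hexp : Complex.exp a = Complex.exp (-b) := by
    rwa [Complex.exp_neg, ← mul_eq_one_iff_eq_inv₀ (Complex.exp_ne_zero b), ← Complex.exp_add]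
  refine add_eq_zero_iff_eq_neg.mpr
    (Complex.exp_inj_of_neg_pi_lt_of_le_pi ha.1 ha.2.le ?_ ?_ hexp) <;>
  rw [Complex.neg_im] <;> linarith

theorem principal_log_of_symplectic_is_infinitesimally_symplectic_general {ι : Type*} [Fintype ι]
    [DecidableEq ι] {J X : Matrix ι ι ℝ} (hJ : (exp X)ᵀ * J * exp X = J)
    (hspec : ∀ a ∈ spectrum ℂ (X.map (algebraMap ℝ ℂ)),
      ∀ b ∈ spectrum ℂ (X.map (algebraMap ℝ ℂ)), Complex.exp (a + b) = 1 → a + b = 0) :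
    J * X + Xᵀ * J = 0 := by
  let φ : Matrix ι ι ℝ →+* Matrix ι ι ℂ := (algebraMap ℝ ℂ).mapMatrix
  have φ_injective : Function.Injective φ := Matrix.map_injective (algebraMap ℝ ℂ).injective
  have hφJ : (exp (φ X))ᵀ * φ J * exp (φ X) = φ J := by
    have hφexp : exp (φ X) = φ (exp X) := (exp_map_algebraMap_complex X).symm
    have hφtranspose : (φ (exp X))ᵀ = φ (exp X)ᵀ := rfl
    rw [hφexp, hφtranspose, ← map_mul, ← map_mul, hJ]
  apply φ_injective
  rw [map_zero, map_add, map_mul, map_mul]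
  exact mul_add_transpose_mul_eq_zero_of_exp_transpose_mul_mul_exp_eq hφJ hspec

/-- **The principal logarithm of a symplectic matrix is infinitesimally symplectic.**
Let `J₀ = [[0, -Iₙ],[Iₙ, 0]]` be the standard `2n×2n` symplectic matrix. Let `A` be a real
`2n×2n` symplectic matrix (`Aᵀ J₀ A = J₀`) such that no eigenvalue of `A` lies on the closed
negative real axis `(-∞, 0]`. If `X` is a real `2n×2n` matrix with `exp(X) = A` and every
eigenvalue `z` of `X` satisfies `-π < Im z < π`, then `J₀ X + Xᵀ J₀ = 0`. -/
theorem principal_log_of_symplectic_is_infinitesimally_symplectic (n : ℕ)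
    (J₀ : Matrix (Fin n ⊕ Fin n) (Fin n ⊕ Fin n) ℝ)
    (hJ : J₀ = Matrix.fromBlocks 0 (-1) 1 0)
    (A X : Matrix (Fin n ⊕ Fin n) (Fin n ⊕ Fin n) ℝ)
    (hA : Aᵀ * J₀ * A = J₀)
    (hspecA : ∀ μ ∈ spectrum ℂ (A.map (algebraMap ℝ ℂ)), ¬(μ.im = 0 ∧ μ.re ≤ 0))
    (hexp : NormedSpace.exp X = A)
    (hspecX : ∀ μ ∈ spectrum ℂ (X.map (algebraMap ℝ ℂ)),
      -Real.pi < μ.im ∧ μ.im < Real.pi) :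
    J₀ * X + Xᵀ * J₀ = 0 :=
  principal_log_of_symplectic_is_infinitesimally_symplectic_general (hexp.symm ▸ hA)
    fun a ha b hb ↦ add_eq_zero_of_cexp_add_eq_one (hspecX a ha) (hspecX b hb)
end

section
/- Let A be an n×n complex matrix none of whose eigenvalues lies on the closed negative real axis (-∞, 0]. Then for every t ∈ [0,1] the matrix t(A - I) + I is invertible, and the matrix X := ∫₀¹ (A - I)·(t(A - I) + I)⁻¹ dt satisfies exp(X) = A. -/
open NormedSpace Matrix

attribute [local instance] Matrix.normedAddCommGroup Matrix.normedSpace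

/-!
The segment `Y t = t(a - 1) + 1` from `1` to `a` consists of units and solves the linear equation
`Y' = (a - 1) Y⁻¹ Y`. The coefficients `(a - 1) (Y t)⁻¹` commute with each other, so the equation
is solved by the exponential of their integral, as in the scalar case. This argument works in every
real Banach algebra. The entrywise sup norm does not make matrices into one, but their operators on
Euclidean space form one with the same topology, and exponential and integral depend on that alone.
-/

open Set MeasureTheory
open scoped Ring

section Algebra

theorem isUnit_smul_sub_one_add_one {𝕜 R : Type*} [Field 𝕜] [LinearOrder 𝕜] [IsStrictOrderedRing 𝕜]
    [Ring R] [Algebra 𝕜 R] {a : R} (ha : ∀ x ∈ spectrum 𝕜 a, 0 < x) {t : 𝕜} (ht : t ∈ Icc 0 1) :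
    IsUnit (t • (a - 1) + 1) := by
  obtain rfl | ht0 := ht.1.eq_or_lt
  · simp
  have hresolvent : IsUnit (algebraMap 𝕜 R (1 - t⁻¹) - a) := by
    refine spectrum.notMem_iff.1 fun hx => (ha _ hx).not_ge ?_
    exact sub_nonpos.2 ((one_le_inv₀ ht0).2 ht.2)
  have hfactor : t • (a - 1) + 1 = (-t) • (algebraMap 𝕜 R (1 - t⁻¹) - a) := by
    have : -t * (1 - t⁻¹) = 1 - t := by field_simp; ring
    rw [smul_sub (-t), Algebra.algebraMap_eq_smul_one, smul_smul, this]
    module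
  rw [hfactor]
  exact hresolvent.smul (Units.mk0 (-t) (neg_ne_zero.2 ht0.ne'))

theorem commute_ringInverse_right {M₀ : Type*} [MonoidWithZero M₀] {a b : M₀} (h : Commute a b) :
    Commute a b⁻¹ʳ := by
  by_cases hb : IsUnit b
  · obtain ⟨u, rfl⟩ := hb
    simpa only [Ring.inverse_unit] using h.units_inv_right
  · simp only [Ring.inverse_non_unit b hb, Commute.zero_right]

theorem map_ringInverse_of_mulEquiv {F M₀ N₀ : Type*} [MonoidWithZero M₀] [MonoidWithZero N₀]
    [EquivLike F M₀ N₀] [MulEquivClass F M₀ N₀] (φ : F) (a : M₀) : φ a⁻¹ʳ = (φ a)⁻¹ʳ := by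
  by_cases ha : IsUnit a
  · obtain ⟨u, rfl⟩ := ha
    calc φ (u : M₀)⁻¹ʳ = (Units.map (φ : M₀ →* N₀) u)⁻¹ := by rw [Ring.inverse_unit]; rfl
      _ = (φ u)⁻¹ʳ := (Ring.inverse_unit _).symm
  · rw [Ring.inverse_non_unit a ha, Ring.inverse_non_unit _ (by simpa using ha), map_zero]

end Algebra

section BanachAlgebra

variable {𝔸 : Type*} [NormedRing 𝔸] [NormedAlgebra ℝ 𝔸] [CompleteSpace 𝔸]

theorem commute_intervalIntegral {c : 𝔸} {f : ℝ → 𝔸} {μ : Measure ℝ} {a b : ℝ}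
    (h : ∀ t ∈ uIcc a b, Commute c (f t)) : Commute c (∫ t in a..b, f t ∂μ) := by
  by_cases hf : IntervalIntegrable f μ a b
  · calc c * ∫ t in a..b, f t ∂μ = ∫ t in a..b, c * f t ∂μ :=
          ((ContinuousLinearMap.mul ℝ 𝔸 c).intervalIntegral_comp_comm hf).symm
      _ = ∫ t in a..b, f t * c ∂μ := intervalIntegral.integral_congr fun t ht => h t ht
      _ = (∫ t in a..b, f t ∂μ) * c :=
          ((ContinuousLinearMap.mul ℝ 𝔸).flip c).intervalIntegral_comp_comm hf
  · rw [intervalIntegral.integral_undef hf]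
    exact Commute.zero_right c

theorem hasDerivWithinAt_exp_of_commute {X : ℝ → 𝔸} {X' : 𝔸} {S : Set ℝ} {s : ℝ} (hs : s ∈ S)
    (hX : HasDerivWithinAt X X' S s) (hcomm : ∀ r ∈ S, Commute (X s) (X r)) :
    HasDerivWithinAt (fun r => exp (X r)) (exp (X s) * X') S s := by
  let _ : NormedAlgebra ℚ 𝔸 := NormedAlgebra.restrictScalars ℚ ℝ 𝔸
  have hexp : HasFDerivAt exp (1 : 𝔸 →L[ℝ] 𝔸) (X s - X s) := by
    rw [sub_self]
    exact hasFDerivAt_exp_zero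
  have hincrement :
      HasDerivWithinAt (fun r => exp (X s) * exp (X r - X s)) (exp (X s) * X') S s :=
    (HasFDerivAt.comp_hasDerivWithinAt (f := fun r => X r - X s) s hexp
      (hX.sub_const (X s))).const_mul (exp (X s))
  refine hincrement.congr_of_mem (fun r hr => ?_) hs
  rw [← NormedSpace.exp_add_of_commute ((hcomm r hr).sub_right (Commute.refl _)), add_sub_cancel]

theorem hasDerivWithinAt_intervalIntegral_Icc {E : Type*} [NormedAddCommGroup E] [NormedSpace ℝ E]
    [CompleteSpace E] {f : ℝ → E} {a b s : ℝ} (hf : ContinuousOn f (Icc a b)) (hs : s ∈ Icc a b) :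
    HasDerivWithinAt (fun r => ∫ t in a..r, f t) (f s) (Icc a b) s := by
  have : Fact (s ∈ Icc a b) := ⟨hs⟩
  exact intervalIntegral.integral_hasDerivWithinAt_right
    (ContinuousOn.intervalIntegrable_of_Icc hs.1 (hf.mono (Icc_subset_Icc_right hs.2)))
    (hf.stronglyMeasurableAtFilter_nhdsWithin measurableSet_Icc s) (hf s hs)

theorem eq_exp_integral_mul_of_hasDerivWithinAt {f Y : ℝ → 𝔸} {a b : ℝ} (hab : a ≤ b)
    (hf : ContinuousOn f (Icc a b))
    (hcomm : ∀ s ∈ Icc a b, ∀ r ∈ Icc a b, Commute (f s) (f r))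
    (hY : ∀ s ∈ Icc a b, HasDerivWithinAt Y (f s * Y s) (Icc a b) s) :
    Y b = exp (∫ t in a..b, f t) * Y a := by
  let _ : NormedAlgebra ℚ 𝔸 := NormedAlgebra.restrictScalars ℚ ℝ 𝔸
  set X : ℝ → 𝔸 := fun s => ∫ t in a..s, f t with hX
  have hsub : ∀ s ∈ Icc a b, uIcc a s ⊆ Icc a b := fun s hs =>
    uIcc_subset_Icc (left_mem_Icc.2 hab) hs
  have hXcomm : ∀ s ∈ Icc a b, ∀ r ∈ Icc a b, Commute (X s) (X r) := fun s hs r hr =>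
    commute_intervalIntegral fun u hu => .symm <| commute_intervalIntegral fun v hv =>
      hcomm u (hsub r hr hu) v (hsub s hs hv)
  have hderiv : ∀ s ∈ Icc a b,
      HasDerivWithinAt (fun r => exp (-X r) * Y r) 0 (Icc a b) s := fun s hs => by
    have hX' := (hasDerivWithinAt_intervalIntegral_Icc hf hs).neg
    have hexp := hasDerivWithinAt_exp_of_commute hs hX'
      fun r hr => (hXcomm s hs r hr).neg_left.neg_right
    refine (hexp.mul (hY s hs)).congr_deriv ?_
    simp only [Pi.neg_apply]
    noncomm_ring
  have hconst : exp (-X b) * Y b = Y a := by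
    have := constant_of_derivWithin_zero (fun s hs => (hderiv s hs).differentiableWithinAt)
      (fun s hs => by
        have hs' := Ico_subset_Icc_self hs
        exact (hderiv s hs').derivWithin (uniqueDiffOn_Icc (hs.1.trans_lt hs.2) s hs'))
      b (right_mem_Icc.2 hab)
    simpa [hX] using this
  calc Y b = exp (X b) * (exp (-X b) * Y b) := by
        rw [← mul_assoc, ← NormedSpace.exp_add_of_commute (Commute.refl _).neg_right,
          add_neg_cancel, exp_zero, one_mul]
    _ = exp (X b) * Y a := by rw [hconst]

theorem exp_integral_sub_one_mul_ringInverse {a : 𝔸} (ha : ∀ x ∈ spectrum ℝ a, 0 < x) :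
    exp (∫ t in (0 : ℝ)..1, (a - 1) * (t • (a - 1) + 1)⁻¹ʳ) = a := by
  have hunit : ∀ t ∈ Icc (0 : ℝ) 1, IsUnit (t • (a - 1) + 1) := fun t ht =>
    isUnit_smul_sub_one_add_one ha ht
  have hcont : ContinuousOn (fun t : ℝ => (a - 1) * (t • (a - 1) + 1)⁻¹ʳ) (Icc 0 1) := by
    refine continuousOn_const.mul fun t ht => ?_
    have hinv : ContinuousAt Ring.inverse (t • (a - 1) + 1) :=
      NormedRing.inverse_continuousAt (hunit t ht).unit
    exact (hinv.comp (f := fun t : ℝ => t • (a - 1) + 1) (by fun_prop)).continuousWithinAt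
  have hcomm {c : 𝔸} (hc : Commute c (a - 1)) (t : ℝ) :
      Commute c ((a - 1) * (t • (a - 1) + 1)⁻¹ʳ) :=
    hc.mul_right (commute_ringInverse_right ((hc.smul_right t).add_right (Commute.one_right c)))
  have hsegment : ∀ t ∈ Icc (0 : ℝ) 1, HasDerivWithinAt (fun t : ℝ => t • (a - 1) + 1)
      ((a - 1) * (t • (a - 1) + 1)⁻¹ʳ * (t • (a - 1) + 1)) (Icc 0 1) t := fun t ht => by
    rw [Ring.inverse_mul_cancel_right _ _ (hunit t ht)]
    simpa only [id, one_smul] using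
      (((hasDerivAt_id t).smul_const (a - 1)).add_const 1).hasDerivWithinAt
  have hsolution := eq_exp_integral_mul_of_hasDerivWithinAt zero_le_one hcont
    (fun s _ r _ => hcomm (hcomm (Commute.refl _) s).symm r) hsegment
  simpa using hsolution.symm

end BanachAlgebra

section Transport

theorem map_exp_of_continuousAlgEquiv {𝕜 A B : Type*} [Field 𝕜] [CharZero 𝕜]
    [Ring A] [Algebra 𝕜 A] [TopologicalSpace A] [IsTopologicalRing A] [T2Space A]
    [Ring B] [Algebra 𝕜 B] [TopologicalSpace B] [IsTopologicalRing B] [T2Space B]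
    (φ : A ≃A[𝕜] B) (x : A) : φ (exp x) = exp (φ x) := by
  rw [exp_eq_tsum 𝕜, exp_eq_tsum 𝕜]
  simpa using φ.toContinuousLinearEquiv.map_tsum (f := fun n : ℕ => ((n.factorial : 𝕜)⁻¹) • x ^ n)

theorem map_intervalIntegral_of_continuousLinearEquiv {𝕜 E F : Type*} [RCLike 𝕜]
    [NormedAddCommGroup E] [NormedSpace 𝕜 E] [NormedSpace ℝ E]
    [NormedAddCommGroup F] [NormedSpace 𝕜 F] [NormedSpace ℝ F]
    (L : E ≃L[𝕜] F) (f : ℝ → E) {μ : Measure ℝ} {a b : ℝ} :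
    L (∫ t in a..b, f t ∂μ) = ∫ t in a..b, L (f t) ∂μ := by
  simp only [intervalIntegral, map_sub, L.integral_comp_comm]

/-- The topological algebra isomorphism from square matrices to the operators on Euclidean space.
It is taken over `ℝ`, whatever `𝕜` is, so that it preserves the spectrum over `ℝ`. -/
noncomputable def matrixEquivEuclideanCLM (𝕜 ι : Type*) [RCLike 𝕜] [Fintype ι] [DecidableEq ι] :
    Matrix ι ι 𝕜 ≃A[ℝ] (EuclideanSpace 𝕜 ι →L[𝕜] EuclideanSpace 𝕜 ι) where
  toAlgEquiv := (Matrix.toEuclideanCLM (𝕜 := 𝕜) (n := ι)).toAlgEquiv.restrictScalars ℝ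
  continuous_toFun := LinearMap.continuous_of_finiteDimensional
    (Matrix.toEuclideanCLM (𝕜 := 𝕜) (n := ι)).toAlgEquiv.toLinearMap
  continuous_invFun := LinearMap.continuous_of_finiteDimensional
    (Matrix.toEuclideanCLM (𝕜 := 𝕜) (n := ι)).symm.toAlgEquiv.toLinearMap

theorem principal_log_integral_repr_general {𝕜 ι : Type*} [RCLike 𝕜] [Fintype ι] [DecidableEq ι]
    (A : Matrix ι ι 𝕜) (hA : ∀ x ∈ spectrum ℝ A, 0 < x) :
    (∀ t ∈ Icc (0 : ℝ) 1, IsUnit (t • (A - 1) + 1)) ∧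
      exp (∫ t in (0 : ℝ)..1, (A - 1) * (t • (A - 1) + 1)⁻¹) = A := by
  refine ⟨fun t ht => isUnit_smul_sub_one_add_one hA ht, ?_⟩
  let _ : NormedAlgebra ℝ (EuclideanSpace 𝕜 ι →L[𝕜] EuclideanSpace 𝕜 ι) :=
    { norm_smul_le := norm_smul_le }
  let φ := matrixEquivEuclideanCLM 𝕜 ι
  apply EquivLike.injective φ
  calc φ (exp (∫ t in (0 : ℝ)..1, (A - 1) * (t • (A - 1) + 1)⁻¹))
      = exp (φ (∫ t in (0 : ℝ)..1, (A - 1) * (t • (A - 1) + 1)⁻¹)) :=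
        map_exp_of_continuousAlgEquiv φ _
    _ = exp (∫ t in (0 : ℝ)..1, φ ((A - 1) * (t • (A - 1) + 1)⁻¹)) :=
        congrArg exp
          (map_intervalIntegral_of_continuousLinearEquiv φ.toContinuousLinearEquiv _)
    _ = exp (∫ t in (0 : ℝ)..1, (φ A - 1) * (t • (φ A - 1) + 1)⁻¹ʳ) := by
        simp only [nonsing_inv_eq_ringInverse, map_ringInverse_of_mulEquiv, map_mul, map_add,
          map_smul, map_sub, map_one]
    _ = φ A := exp_integral_sub_one_mul_ringInverse (by rwa [AlgEquiv.spectrum_eq])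

end Transport

/-- **Integral representation of the principal logarithm.**
Let `A` be an `n×n` complex matrix none of whose eigenvalues lies on the closed negative real
axis `(-∞, 0]`. Then for every `t ∈ [0,1]` the matrix `t(A - I) + I` is invertible, and the
matrix `X := ∫₀¹ (A - I)·(t(A - I) + I)⁻¹ dt` satisfies `exp(X) = A`. -/
theorem principal_log_integral_repr (n : ℕ)
    (A : Matrix (Fin n) (Fin n) ℂ)
    (hspec : ∀ μ ∈ spectrum ℂ A, ¬(μ.im = 0 ∧ μ.re ≤ 0)) :
    (∀ t ∈ Set.Icc (0:ℝ) 1, IsUnit ((t : ℂ) • (A - 1) + 1)) ∧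
      NormedSpace.exp
        (∫ t in (0:ℝ)..1, (A - 1) * ((t : ℂ) • (A - 1) + 1)⁻¹) = A := by
  have hpos : ∀ x ∈ spectrum ℝ A, 0 < x := fun x hx =>
    not_le.1 fun hx0 => hspec x (spectrum.algebraMap_mem ℂ hx) ⟨Complex.ofReal_im x, hx0⟩
  simpa only [Complex.coe_smul] using principal_log_integral_repr_general A hpos
end

section
/- Let A : [0,1] → Matrix (Fin d) (Fin d) ℝ and e : [0,1] → ℝ^d be continuous, and let Φ : [0,1] → Matrix (Fin d) (Fin d) ℝ be differentiable with Φ(0) = I, Φ'(t) = A(t)·Φ(t), and Φ(t) invertible for every t ∈ [0,1]. Assume I - Φ(1) is invertible. If z : [0,1] → ℝ^d is differentiable with z'(t) = A(t)z(t) + e(t) for all t and z(1) = z(0), then z(0) = (I - Φ(1))⁻¹ Φ(1) ∫₀¹ Φ(s)⁻¹ e(s) ds, and consequently ‖z(0)‖ ≤ ‖(I - Φ(1))⁻¹ Φ(1)‖ · (sup_{s ∈ [0,1]} ‖Φ(s)⁻¹‖) · ∫₀¹ ‖e(s)‖ ds. -/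
open Matrix MeasureTheory intervalIntegral

attribute [local instance] Matrix.normedAddCommGroup Matrix.normedSpace

/-!
Differentiating `Φ⁻¹ z` cancels the homogeneous part of the equation and leaves `(Φ⁻¹ z)' = Φ⁻¹ e`.
Integrating gives the variation of constants formula `z(b) = Φ(b) (z(a) + ∫ Φ⁻¹ e)`, and periodicity
turns it into a linear equation for `z(a)` with operator `1 - Φ(b)`.
-/

open scoped Ring

theorem map_ringInverse_s11 {M N F : Type*} [MonoidWithZero M] [MonoidWithZero N] [EquivLike F M N]
    [MulEquivClass F M N] (f : F) (x : M) : f x⁻¹ʳ = (f x)⁻¹ʳ := by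
  by_cases hx : IsUnit x
  · rw [← mul_one (f x⁻¹ʳ), ← Ring.mul_inverse_cancel (f x) (hx.map f), ← mul_assoc, ← map_mul,
      Ring.inverse_mul_cancel x hx, map_one, one_mul]
  · rw [Ring.inverse_non_unit x hx, map_zero,
      Ring.inverse_non_unit (f x) ((MulEquiv.isUnit_map f).not.2 hx)]

section LinearEquation

variable {𝕜 : Type*} [NontriviallyNormedField 𝕜] {s : Set 𝕜} {t : 𝕜}

theorem hasDerivWithinAt_ringInverse_of_left_mul {R : Type*} [NormedRing R] [NormedAlgebra 𝕜 R]
    [HasSummableGeomSeries R] {Φ : 𝕜 → R} {a : R} (hΦ : HasDerivWithinAt Φ (a * Φ t) s t)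
    (hu : IsUnit (Φ t)) :
    HasDerivWithinAt (fun x => (Φ x)⁻¹ʳ) (-((Φ t)⁻¹ʳ * a)) s t := by
  obtain ⟨u, hu⟩ := hu
  have hinv := hasFDerivAt_ringInverse (𝕜 := 𝕜) u
  rw [hu] at hinv
  refine (hinv.comp_hasDerivWithinAt t hΦ).congr_deriv ?_
  simp only [_root_.neg_apply, ContinuousLinearMap.mulLeftRight_apply, ← hu, Ring.inverse_unit,
    mul_assoc, Units.mul_inv, mul_one]

theorem hasDerivWithinAt_ringInverse_apply {E : Type*} [NormedAddCommGroup E] [NormedSpace 𝕜 E]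
    [CompleteSpace E] {Φ : 𝕜 → E →L[𝕜] E} {A : E →L[𝕜] E} {z : 𝕜 → E} {e : E}
    (hΦ : HasDerivWithinAt Φ (A * Φ t) s t) (hu : IsUnit (Φ t))
    (hz : HasDerivWithinAt z (A (z t) + e) s t) :
    HasDerivWithinAt (fun x => (Φ x)⁻¹ʳ (z x)) ((Φ t)⁻¹ʳ e) s t := by
  refine ((hasDerivWithinAt_ringInverse_of_left_mul hΦ hu).clm_apply hz).congr_deriv ?_
  simp only [_root_.neg_apply, mul_apply_eq_comp, map_add, neg_add_cancel_left]

end LinearEquation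

section IntegralOfOperators

variable {E F : Type*} [NormedAddCommGroup E] [NormedSpace ℝ E] [NormedAddCommGroup F]
  [NormedSpace ℝ F] {Q : ℝ → E →L[ℝ] F} {e : ℝ → E} {a b : ℝ}

theorem intervalIntegrable_clm_apply (hab : a ≤ b) (hQ : ContinuousOn Q (Set.Icc a b))
    (he : IntervalIntegrable e volume a b) :
    IntervalIntegrable (fun t => Q t (e t)) volume a b := by
  rw [intervalIntegrable_iff_integrableOn_Icc_of_le hab] at he ⊢
  obtain ⟨C, hC⟩ := isCompact_Icc.exists_bound_of_continuousOn hQ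
  exact (ContinuousLinearMap.id ℝ (E →L[ℝ] F)).integrable_of_bilin_of_bdd_left C
    (hQ.aestronglyMeasurable measurableSet_Icc)
    ((ae_restrict_iff' measurableSet_Icc).2 (.of_forall hC)) he

theorem norm_integral_clm_apply_le (hab : a ≤ b)
    (hQ : BddAbove (Set.range fun t : Set.Icc a b => ‖Q t‖))
    (he : IntervalIntegrable e volume a b) :
    ‖∫ t in a..b, Q t (e t)‖ ≤ (⨆ t : Set.Icc a b, ‖Q t‖) * ∫ t in a..b, ‖e t‖ := by
  rw [← intervalIntegral.integral_const_mul]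
  refine norm_integral_le_of_norm_le hab (.of_forall fun t ht => ?_) (he.norm.const_mul _)
  exact (Q t).le_of_opNorm_le (le_ciSup hQ ⟨t, Set.Ioc_subset_Icc_self ht⟩) (e t)

end IntegralOfOperators

section FundamentalSolution

variable {E : Type*} [NormedAddCommGroup E] [NormedSpace ℝ E]

/-- `Φ` is the fundamental solution on `[a, b]` of `x' = A(t) x`, normalized at `a`. Invertibility
is part of the definition because `A` may be discontinuous: `Φ(t) = (1 - t)² • 1` solves such an
equation on `[0, 1]` and vanishes at `1`. -/
structure IsFundamentalSolutionOn (A Φ : ℝ → E →L[ℝ] E) (a b : ℝ) : Prop where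
  map_left : Φ a = 1
  hasDerivWithinAt : ∀ t ∈ Set.Icc a b, HasDerivWithinAt Φ (A t * Φ t) (Set.Icc a b) t
  isUnit : ∀ t ∈ Set.Icc a b, IsUnit (Φ t)

namespace IsFundamentalSolutionOn

variable [CompleteSpace E] {A Φ : ℝ → E →L[ℝ] E} {e z : ℝ → E} {a b : ℝ}

theorem continuousOn_ringInverse (hΦ : IsFundamentalSolutionOn A Φ a b) :
    ContinuousOn (fun t => (Φ t)⁻¹ʳ) (Set.Icc a b) := fun t ht =>
  (hasDerivWithinAt_ringInverse_of_left_mul (hΦ.hasDerivWithinAt t ht)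
    (hΦ.isUnit t ht)).continuousWithinAt

theorem bddAbove_norm_ringInverse (hΦ : IsFundamentalSolutionOn A Φ a b) :
    BddAbove (Set.range fun t : Set.Icc a b => ‖(Φ t)⁻¹ʳ‖) := by
  simpa only [Set.image_eq_range] using
    isCompact_Icc.bddAbove_image hΦ.continuousOn_ringInverse.norm

theorem variation_of_constants (hΦ : IsFundamentalSolutionOn A Φ a b) (hab : a ≤ b)
    (he : IntervalIntegrable e volume a b)
    (hz : ∀ t ∈ Set.Icc a b, HasDerivWithinAt z (A t (z t) + e t) (Set.Icc a b) t) :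
    z b = Φ b (z a + ∫ t in a..b, (Φ t)⁻¹ʳ (e t)) := by
  have hderiv : ∀ t ∈ Set.Icc a b,
      HasDerivWithinAt (fun t => (Φ t)⁻¹ʳ (z t)) ((Φ t)⁻¹ʳ (e t)) (Set.Icc a b) t := fun t ht =>
    hasDerivWithinAt_ringInverse_apply (hΦ.hasDerivWithinAt t ht) (hΦ.isUnit t ht) (hz t ht)
  have hint : ∫ t in a..b, (Φ t)⁻¹ʳ (e t) = (Φ b)⁻¹ʳ (z b) - (Φ a)⁻¹ʳ (z a) :=
    integral_eq_sub_of_hasDerivAt_of_le hab (fun t ht => (hderiv t ht).continuousWithinAt)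
      (fun t ht => (hderiv t (Set.Ioo_subset_Icc_self ht)).hasDerivAt (Icc_mem_nhds ht.1 ht.2))
      (intervalIntegrable_clm_apply hab hΦ.continuousOn_ringInverse he)
  rw [hint, hΦ.map_left, Ring.inverse_one, one_apply_eq_self, add_sub_cancel,
    ← mul_apply_eq_comp, Ring.mul_inverse_cancel _ (hΦ.isUnit b ⟨hab, le_rfl⟩),
    one_apply_eq_self]

theorem eq_of_periodic (hΦ : IsFundamentalSolutionOn A Φ a b) (hab : a ≤ b)
    (he : IntervalIntegrable e volume a b) (hmono : IsUnit (1 - Φ b))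
    (hz : ∀ t ∈ Set.Icc a b, HasDerivWithinAt z (A t (z t) + e t) (Set.Icc a b) t)
    (hper : z b = z a) :
    z a = ((1 - Φ b)⁻¹ʳ * Φ b) (∫ t in a..b, (Φ t)⁻¹ʳ (e t)) := by
  have hlin : (1 - Φ b) (z a) = Φ b (∫ t in a..b, (Φ t)⁻¹ʳ (e t)) := by
    rw [_root_.sub_apply, one_apply_eq_self, sub_eq_iff_eq_add', ← map_add,
      ← hΦ.variation_of_constants hab he hz, hper]
  rw [mul_apply_eq_comp, ← hlin, ← mul_apply_eq_comp,
    Ring.inverse_mul_cancel _ hmono, one_apply_eq_self]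

end IsFundamentalSolutionOn

theorem periodic_solution_initial_value_bound_general [CompleteSpace E] {A Φ : ℝ → E →L[ℝ] E}
    {e z : ℝ → E} {a b : ℝ} (hab : a ≤ b) (hΦ : IsFundamentalSolutionOn A Φ a b)
    (he : IntervalIntegrable e volume a b) (hmono : IsUnit (1 - Φ b))
    (hz : ∀ t ∈ Set.Icc a b, HasDerivWithinAt z (A t (z t) + e t) (Set.Icc a b) t)
    (hper : z b = z a) :
    z a = ((1 - Φ b)⁻¹ʳ * Φ b) (∫ t in a..b, (Φ t)⁻¹ʳ (e t)) ∧
      ‖z a‖ ≤ ‖(1 - Φ b)⁻¹ʳ * Φ b‖ * (⨆ t : Set.Icc a b, ‖(Φ t)⁻¹ʳ‖) * ∫ t in a..b, ‖e t‖ := by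
  have hza := hΦ.eq_of_periodic hab he hmono hz hper
  refine ⟨hza, ?_⟩
  calc ‖z a‖ = ‖((1 - Φ b)⁻¹ʳ * Φ b) (∫ t in a..b, (Φ t)⁻¹ʳ (e t))‖ := congrArg norm hza
    _ ≤ ‖(1 - Φ b)⁻¹ʳ * Φ b‖ * ‖∫ t in a..b, (Φ t)⁻¹ʳ (e t)‖ := ContinuousLinearMap.le_opNorm _ _
    _ ≤ ‖(1 - Φ b)⁻¹ʳ * Φ b‖ * ((⨆ t : Set.Icc a b, ‖(Φ t)⁻¹ʳ‖) * ∫ t in a..b, ‖e t‖) := by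
      gcongr
      exact norm_integral_clm_apply_le hab hΦ.bddAbove_norm_ringInverse he
    _ = _ := (mul_assoc _ _ _).symm

end FundamentalSolution

section EuclideanMatrix

variable {n : Type*} [Fintype n] [DecidableEq n]

theorem toEuclideanCLM_inv {𝕜 : Type*} [RCLike 𝕜] (M : Matrix n n 𝕜) :
    toEuclideanCLM (𝕜 := 𝕜) M⁻¹ = (toEuclideanCLM (𝕜 := 𝕜) M)⁻¹ʳ := by
  rw [nonsing_inv_eq_ringInverse, map_ringInverse_s11]

theorem hasDerivWithinAt_toEuclideanCLM {𝕜 : Type*} [RCLike 𝕜] {Φ : 𝕜 → Matrix n n 𝕜}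
    {M : Matrix n n 𝕜} {s : Set 𝕜} {t : 𝕜} (hΦ : HasDerivWithinAt Φ M s t) :
    HasDerivWithinAt (fun x => toEuclideanCLM (𝕜 := 𝕜) (Φ x)) (toEuclideanCLM (𝕜 := 𝕜) M) s t :=
  (toEuclideanCLM (n := n) (𝕜 := 𝕜)).toAlgEquiv.toLinearMap.toContinuousLinearMap.hasFDerivAt
    |>.comp_hasDerivWithinAt t hΦ

theorem isFundamentalSolutionOn_toEuclideanCLM {A Φ : ℝ → Matrix n n ℝ} {a b : ℝ} (hΦa : Φ a = 1)
    (hΦ : ∀ t ∈ Set.Icc a b, HasDerivWithinAt Φ (A t * Φ t) (Set.Icc a b) t)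
    (hΦinv : ∀ t ∈ Set.Icc a b, IsUnit (Φ t)) :
    IsFundamentalSolutionOn (fun t => toEuclideanCLM (𝕜 := ℝ) (A t))
      (fun t => toEuclideanCLM (𝕜 := ℝ) (Φ t)) a b where
  map_left := by rw [hΦa, map_one]
  hasDerivWithinAt t ht := by
    simpa only [map_mul] using hasDerivWithinAt_toEuclideanCLM (hΦ t ht)
  isUnit t ht := (hΦinv t ht).map _

end EuclideanMatrix

/-- **A priori bound on the initial value of a periodic solution of a perturbed linear system.**
Let `A : [0,1] → Matrix (Fin d) (Fin d) ℝ` and `e : [0,1] → ℝ^d` be continuous, and let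
`Φ` be the fundamental solution of `ẋ = A(t)x` (`Φ(0) = I`, `Φ' = AΦ`, each `Φ(t)` invertible),
with `I - Φ(1)` invertible. If `z` solves `z' = A(t)z + e(t)` with `z(1) = z(0)`, then
`z(0) = (I - Φ(1))⁻¹ Φ(1) ∫₀¹ Φ(s)⁻¹ e(s) ds`, and consequently
`‖z(0)‖ ≤ ‖(I - Φ(1))⁻¹Φ(1)‖ · (sup_{s∈[0,1]} ‖Φ(s)⁻¹‖) · ∫₀¹ ‖e(s)‖ ds`. -/
theorem periodic_solution_initial_value_bound (d : ℕ)
    (A : ℝ → Matrix (Fin d) (Fin d) ℝ)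
    (e : ℝ → EuclideanSpace ℝ (Fin d))
    (Φ : ℝ → Matrix (Fin d) (Fin d) ℝ)
    (hA : ContinuousOn A (Set.Icc 0 1))
    (he : ContinuousOn e (Set.Icc 0 1))
    (hΦ0 : Φ 0 = 1)
    (hΦ : ∀ t ∈ Set.Icc (0:ℝ) 1, HasDerivWithinAt Φ (A t * Φ t) (Set.Icc 0 1) t)
    (hΦinv : ∀ t ∈ Set.Icc (0:ℝ) 1, IsUnit (Φ t))
    (hmono : IsUnit ((1 : Matrix (Fin d) (Fin d) ℝ) - Φ 1))
    (z : ℝ → EuclideanSpace ℝ (Fin d))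
    (hz : ∀ t ∈ Set.Icc (0:ℝ) 1, HasDerivWithinAt z
      (Matrix.toEuclideanCLM (𝕜 := ℝ) (A t) (z t) + e t) (Set.Icc 0 1) t)
    (hper : z 1 = z 0) :
    z 0 = Matrix.toEuclideanCLM (𝕜 := ℝ) ((1 - Φ 1)⁻¹ * Φ 1)
        (∫ s in (0:ℝ)..1, Matrix.toEuclideanCLM (𝕜 := ℝ) ((Φ s)⁻¹) (e s)) ∧
      ‖z 0‖ ≤ ‖Matrix.toEuclideanCLM (𝕜 := ℝ) ((1 - Φ 1)⁻¹ * Φ 1)‖ *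
        (⨆ s : Set.Icc (0:ℝ) 1, ‖Matrix.toEuclideanCLM (𝕜 := ℝ) ((Φ (s : ℝ))⁻¹)‖) *
        ∫ s in (0:ℝ)..1, ‖e s‖ := by
  simpa only [map_mul, toEuclideanCLM_inv, map_sub, map_one] using
    periodic_solution_initial_value_bound_general zero_le_one
      (isFundamentalSolutionOn_toEuclideanCLM hΦ0 hΦ hΦinv)
      (he.intervalIntegrable_of_Icc zero_le_one)
      (by simpa only [map_sub, map_one] using hmono.map (toEuclideanCLM (𝕜 := ℝ))) hz hper
end
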